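/- Let d, m, k be natural numbers with m ≥ 1 and k ≤ d, and let S be an m-element subset of Fin (d+m) chosen uniformly at random. Then for every k-element subset T of Fin (d+m), the probability that S is disjoint from T is at most ((d : ℝ)/(d+m))^k. -/

import Mathlib

/-!
The `m`-element sets disjoint from `T` are exactly the `m`-element subsets of `Tᶜ`, so the
probability equals `(d + m - k).choose m / (d + m).choose m`, that is
`∏ i < k, (d - i) / (d + m - i)`. Each factor is at most `d / (d + m)`. The product is bounded by
induction on `k`, cleared of denominators, in `choose_mul_pow_le`.
-/

/-- The uniform distribution on all `m`-element subsets of `Fin (d + m)`: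
the provider's secret check slots. -/
noncomputable def uniformCheckSet (d m : ℕ) : PMF (Finset (Fin (d + m))) :=
  PMF.uniformOfFinset (Finset.powersetCard m (Finset.univ : Finset (Fin (d + m))))
    (Finset.powersetCard_nonempty.mpr (by simp))

/-- The bound `C(d + m - k, m) / C(d + m, m) ≤ (d / (d + m)) ^ k` without divisions. -/
lemma choose_mul_pow_le (d m k : ℕ) (hk : k ≤ d) :
    (d + m - k).choose m * (d + m) ^ k ≤ d ^ k * (d + m).choose m := by
  induction k with
  | zero => simp
  | succ k ih =>
    specialize ih (by omega)
    obtain ⟨e, rfl⟩ := Nat.exists_eq_add_of_le hk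
    rw [show k + 1 + e + m - k = e + m + 1 by omega] at ih
    rw [show k + 1 + e + m - (k + 1) = e + m by omega]
    have h := Nat.choose_mul_succ_eq (e + m) m
    rw [show e + m + 1 - m = e + 1 by omega] at h
    have hd : (e + 1) * (k + 1 + e + m) ≤ (k + 1 + e) * (e + m + 1) := by nlinarith
    generalize k + 1 + e + m = n at *
    generalize k + 1 + e = d at *
    refine Nat.le_of_mul_le_mul_right ?_ (Nat.succ_pos (e + m))
    calc (e + m).choose m * n ^ (k + 1) * (e + m + 1)
        = (e + m).choose m * (e + m + 1) * n ^ k * n := by ring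
      _ = (e + m + 1).choose m * n ^ k * ((e + 1) * n) := by rw [h]; ring
      _ ≤ d ^ k * n.choose m * (d * (e + m + 1)) := Nat.mul_le_mul ih hd
      _ = d ^ (k + 1) * n.choose m * (e + m + 1) := by ring

lemma card_filter_disjoint_powersetCard {α : Type*} [Fintype α] [DecidableEq α] (m : ℕ)
    (T : Finset α) :
    ((Finset.powersetCard m Finset.univ).filter (fun S => Disjoint S T)).card
      = (Fintype.card α - T.card).choose m := by
  rw [← Finset.card_compl, ← Finset.card_powersetCard]
  congr 1
  ext S
  simp [Finset.mem_powersetCard, Finset.subset_compl_iff_disjoint_right, and_comm]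

/-- With `m ≥ 1` and `k ≤ d`: for every `k`-element subset `T` of `Fin (d + m)`
(the slots in which the server hides model parameters), the probability that a
uniformly random `m`-element check set `S` is disjoint from `T` is at most
`(d/(d + m))^k`. -/
theorem silver_platter_evasion_prob_le (d m k : ℕ) (hm : 1 ≤ m) (hk : k ≤ d) :
    ∀ T : Finset (Fin (d + m)), T.card = k →
      (((uniformCheckSet d m).toOuterMeasure {S | Disjoint S T}).toReal)
        ≤ ((d : ℝ) / ((d : ℝ) + (m : ℝ))) ^ k := by
  classical
  intro T hT
  have hc : (0 : ℝ) < ((d + m).choose m : ℝ) := by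
    exact_mod_cast Nat.choose_pos (Nat.le_add_left m d)
  have hn : (0 : ℝ) < (d : ℝ) + m := by
    exact_mod_cast (by omega : 0 < d + m)
  have h := card_filter_disjoint_powersetCard m T
  rw [Fintype.card_fin, hT] at h
  rw [uniformCheckSet, PMF.toOuterMeasure_uniformOfFinset_apply]
  simp only [Set.mem_ofPred_eq]
  rw [Finset.filter_congr_decidable, h, Finset.card_powersetCard, Finset.card_univ,
    Fintype.card_fin, ENNReal.toReal_div, ENNReal.toReal_natCast, ENNReal.toReal_natCast, div_pow,
    div_le_div_iff₀ hc (pow_pos hn k)]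
  exact_mod_cast choose_mul_pow_le d m k hk
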